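/- Let T = (T_1, …, T_n) be a Szegő tuple on a complex Hilbert space H. Then the following are equivalent: (a) (I − T_i* T_i)(I − T_j* T_j) = 0 for all i ≠ j; (b) for all i ≠ j, the restriction of T_i to the defect space 𝒟_{T_j} is an isometry of 𝒟_{T_j} into itself, i.e., T_i(𝒟_{T_j}) ⊆ 𝒟_{T_j} and ‖T_i D_{T_j} h‖ = ‖D_{T_j} h‖ for all h ∈ H. -/

import Mathlib

/-!
Write `Δ_X(A) = X A X*`. Two facts drive the equivalence.

* `szegoInv T` is the product of the commuting maps `1 - Δ_{T k}` applied to the identity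
  (`szegoInv_eq_foldr`). If `X` is of class `C_{·0}` and `B - X B X* ≥ 0`, then
  `⟨B h, h⟩ ≥ ⟨B X*ᵐ h, X*ᵐ h⟩ → 0`, so `B ≥ 0` (`nonneg_of_delta_nonneg`). Removing all factors
  except those of `T i` and `T j` leaves `F - T i F (T i)* ≥ 0` with `F = 1 - T j (T j)*`
  (`IsSzegoTuple.pair_ineq`).
* Consequently `(T i)*` maps `ker (1 - (T j)* (T j))`, the vectors on which `T j` is isometric, to
  itself: for such an `x` put `y = T j x`; then `⟨F y, y⟩ = 0`, hence `⟨F (T i)* y, (T i)* y⟩ = 0`,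
  which forces `(T j)* T j (T i)* x = (T i)* x` (`IsSzegoTuple.adjoint_mem_ker`). Taking orthogonal
  complements, `T i` maps the defect space of `T j` to itself. Thus the invariance holds for every
  Szegő tuple.

The isometry condition says `D i * D j = 0`, since `‖T i h‖² = ‖h‖² - ‖D i h‖²`, and this is
equivalent to `D i ^ 2 * D j ^ 2 = 0`.
-/

open ContinuousLinearMap Filter Topology

variable {H : Type*} [NormedAddCommGroup H] [InnerProductSpace ℂ H] [CompleteSpace H]

/-- `T^k = T 0 ^ k 0 * T 1 ^ k 1 * ⋯` in increasing index order. -/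
noncomputable def finPow {n : ℕ} (T : Fin n → H →L[ℂ] H) (k : Fin n → ℕ) : H →L[ℂ] H :=
  ((List.finRange n).map fun i => T i ^ k i).prod

/-- `𝕊ₙ⁻¹(T, T*) = ∑_{k ∈ {0,1}ⁿ} (−1)^{|k|} T^k T^{*k}`. -/
noncomputable def szegoInv {n : ℕ} (T : Fin n → H →L[ℂ] H) : H →L[ℂ] H :=
  ∑ k : Fin n → Bool,
    ((-1 : ℂ) ^ (∑ i, if k i then 1 else 0)) •
      (finPow T (fun i => if k i then 1 else 0) *
        adjoint (finPow T (fun i => if k i then 1 else 0)))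

/-- A Szegő tuple: commuting contractions, `𝕊ₙ⁻¹(T,T*) ≥ 0`, each `Tᵢ` of class `C_{·0}`. -/
structure IsSzegoTuple {n : ℕ} (T : Fin n → H →L[ℂ] H) : Prop where
  comm : ∀ i j, T i * T j = T j * T i
  contraction : ∀ i, ‖T i‖ ≤ 1
  pos : (szegoInv T).IsPositive
  pure : ∀ i (h : H), Tendsto (fun m : ℕ => (adjoint (T i) ^ m) h) atTop (𝓝 0)

/-- A Beurling tuple: a Szegő tuple with `(I − Tᵢ*Tᵢ)(I − Tⱼ*Tⱼ) = 0` for `i ≠ j`. -/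
def IsBeurlingTuple {n : ℕ} (T : Fin n → H →L[ℂ] H) : Prop :=
  IsSzegoTuple T ∧
    ∀ i j, i ≠ j → (1 - adjoint (T i) * T i) * (1 - adjoint (T j) * T j) = 0

/-- Apply `∏_{k ∈ L} (I − Δ_{T k})` to `A`, where `Δ_X(A) = X A X*`. -/
noncomputable def applyDelta {n : ℕ} (T : Fin n → H →L[ℂ] H) (L : List (Fin n))
    (A : H →L[ℂ] H) : H →L[ℂ] H :=
  L.foldr (fun k B => B - T k * B * adjoint (T k)) A

/-- The truncated defect operator `D²_{j,T,P} = (∏_{k ∈ P} (I − Δ_{T k}))(I − Tⱼ*Tⱼ)`. -/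
noncomputable def truncDefectSq {n : ℕ} (T : Fin n → H →L[ℂ] H) (j : Fin n)
    (P : Finset (Fin n)) : H →L[ℂ] H :=
  applyDelta T (P.sort (· ≤ ·)) (1 - adjoint (T j) * T j)

/-- `D²_{j,T} = D²_{j,T,P}` for `P = {1,…,n} \ {j}`. -/
noncomputable def jointDefectSq {n : ℕ} (T : Fin n → H →L[ℂ] H) (j : Fin n) : H →L[ℂ] H :=
  truncDefectSq T j (Finset.univ.erase j)

/-- The `(i,j)`-th joint commutator `δᵢⱼ(T) = (∏_{k ∉ {i,j}} (I − Δ_{T k}))([Tⱼ, Tᵢ*])`. -/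
noncomputable def jointComm {n : ℕ} (T : Fin n → H →L[ℂ] H) (i j : Fin n) : H →L[ℂ] H :=
  applyDelta T (((Finset.univ.erase i).erase j).sort (· ≤ ·))
    (T j * adjoint (T i) - adjoint (T i) * T j)

/-- Extend a multi-index supported on `P` by zero: gives `T_P^α` via `finPow`. -/
def extendSupport {n : ℕ} (P : Finset (Fin n)) (α : ↥P → ℕ) : Fin n → ℕ :=
  fun i => if h : i ∈ P then α ⟨i, h⟩ else 0

/-! ### The Szegő operator as an iterated difference -/

/-- Splitting `k ∈ {0,1}ⁿ⁺¹` according to `k 0` peels off the factor `1 - Δ_{T 0}`. -/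
lemma szegoInv_succ {n : ℕ} (T : Fin (n + 1) → H →L[ℂ] H) :
    szegoInv T = szegoInv (fun i : Fin n => T i.succ)
      - T 0 * szegoInv (fun i : Fin n => T i.succ) * adjoint (T 0) := by
  have hcons : ∀ (b : Bool) (k : Fin n → Bool),
      finPow T (fun i => if (Fin.cons b k : Fin (n + 1) → Bool) i then 1 else 0) =
        T 0 ^ (if b then 1 else 0) *
          finPow (fun i : Fin n => T i.succ) (fun i => if k i then 1 else 0) := by
    intro b k
    simp [finPow, List.finRange_succ, Function.comp_def]
  have hadj : ∀ A B : H →L[ℂ] H, adjoint (A * B) = adjoint B * adjoint A :=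
    fun A B => adjoint_comp A B
  unfold szegoInv
  rw [← (Fin.consEquiv (fun _ : Fin (n + 1) => Bool)).sum_comp, Fintype.sum_prod_type]
  change (∑ b : Bool, ∑ k : Fin n → Bool,
    ((-1 : ℂ) ^ (∑ i, if (Fin.cons b k : Fin (n + 1) → Bool) i then 1 else 0)) •
      (finPow T (fun i => if (Fin.cons b k : Fin (n + 1) → Bool) i then 1 else 0) *
        adjoint (finPow T
          (fun i => if (Fin.cons b k : Fin (n + 1) → Bool) i then 1 else 0)))) = _
  simp_rw [hcons, Fin.sum_univ_succ, Fin.cons_zero, Fin.cons_succ, Fintype.sum_bool]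
  rw [sub_eq_add_neg, add_comm]
  congr 1
  · simp
  · rw [Finset.mul_sum, Finset.sum_mul, ← Finset.sum_neg_distrib]
    refine Finset.sum_congr rfl fun k _ => ?_
    simp [hadj, pow_add, mul_assoc]

lemma szegoInv_eq_foldr {n : ℕ} (T : Fin n → H →L[ℂ] H) :
    szegoInv T = applyDelta T (List.finRange n) 1 := by
  induction n with
  | zero =>
    have : adjoint (1 : H →L[ℂ] H) = 1 := adjoint_id
    simp [szegoInv, applyDelta, finPow, this]
  | succ n ih =>
    rw [szegoInv_succ, ih, applyDelta, applyDelta, List.finRange_succ, List.foldr_cons,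
      List.foldr_map]

/-- The factors `1 - Δ_{T k}` commute, so their order is irrelevant. -/
lemma applyDelta_perm {n : ℕ} (T : Fin n → H →L[ℂ] H) (hc : ∀ i j, T i * T j = T j * T i)
    {L L' : List (Fin n)} (h : L.Perm L') (A : H →L[ℂ] H) :
    applyDelta T L A = applyDelta T L' A := by
  unfold applyDelta
  refine h.foldr_eq' (fun i _ j _ B => ?_) A
  have hc' : adjoint (T i) * adjoint (T j) = adjoint (T j) * adjoint (T i) := by
    have := congrArg adjoint (hc j i)
    rwa [show adjoint (T j * T i) = _ from adjoint_comp _ _,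
      show adjoint (T i * T j) = _ from adjoint_comp _ _] at this
  have e : T j * (T i * B * adjoint (T i)) * adjoint (T j)
      = T i * (T j * B * adjoint (T j)) * adjoint (T i) := by
    calc T j * (T i * B * adjoint (T i)) * adjoint (T j)
        = (T j * T i) * B * (adjoint (T i) * adjoint (T j)) := by simp only [mul_assoc]
      _ = (T i * T j) * B * (adjoint (T j) * adjoint (T i)) := by rw [hc j i, hc']
      _ = _ := by simp only [mul_assoc]
  simp only [mul_sub, sub_mul, e]
  abel

/-! ### Removing factors by purity -/

lemma reApplyInnerSelf_delta (X B : H →L[ℂ] H) (h : H) :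
    (B - X * B * adjoint X).reApplyInnerSelf h =
      B.reApplyInnerSelf h - B.reApplyInnerSelf (adjoint X h) := by
  change RCLike.re (inner ℂ (B h - X (B (adjoint X h))) h : ℂ) = _
  rw [inner_sub_left, map_sub, ← adjoint_inner_right X]
  rfl

lemma reApplyInnerSelf_one (h : H) : (1 : H →L[ℂ] H).reApplyInnerSelf h = ‖h‖ ^ 2 :=
  inner_self_eq_norm_sq (𝕜 := ℂ) h

/-- If `X*ᵐ → 0` strongly, then `B - X B X* ≥ 0` implies `B ≥ 0`. Here `A ≥ 0` means
`0 ≤ re ⟪A h, h⟫` for all `h`; self-adjointness of `B` is not needed. -/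
lemma nonneg_of_delta_nonneg {X B : H →L[ℂ] H}
    (hX : ∀ h : H, Tendsto (fun m : ℕ => (adjoint X ^ m) h) atTop (𝓝 0))
    (hB : ∀ h, 0 ≤ (B - X * B * adjoint X).reApplyInnerSelf h) (h : H) :
    0 ≤ B.reApplyInnerSelf h := by
  have step : ∀ h, B.reApplyInnerSelf (adjoint X h) ≤ B.reApplyInnerSelf h := by
    intro h
    have := hB h
    rw [reApplyInnerSelf_delta] at this
    linarith
  have iter : ∀ m : ℕ, B.reApplyInnerSelf ((adjoint X ^ m) h) ≤ B.reApplyInnerSelf h := by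
    intro m
    induction m with
    | zero => simp
    | succ m ih =>
      rw [pow_succ']
      exact (step _).trans ih
  have lim := (B.reApplyInnerSelf_continuous.tendsto 0).comp (hX h)
  have h0 : B.reApplyInnerSelf 0 = 0 := by simp [reApplyInnerSelf_apply]
  rw [h0] at lim
  exact le_of_tendsto' lim iter

lemma applyDelta_nonneg {n : ℕ} {T : Fin n → H →L[ℂ] H}
    (hT : ∀ i (h : H), Tendsto (fun m : ℕ => (adjoint (T i) ^ m) h) atTop (𝓝 0))
    (L : List (Fin n)) (A : H →L[ℂ] H) (hA : ∀ h, 0 ≤ (applyDelta T L A).reApplyInnerSelf h) :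
    ∀ h, 0 ≤ A.reApplyInnerSelf h := by
  induction L with
  | nil => exact hA
  | cons i L ih => exact ih (nonneg_of_delta_nonneg (hT i) hA)

/-- For `F = 1 - T j (T j)*`, a pair from a Szegő tuple satisfies `F - T i F (T i)* ≥ 0`. -/
lemma IsSzegoTuple.pair_ineq {n : ℕ} {T : Fin n → H →L[ℂ] H} (hT : IsSzegoTuple T)
    {i j : Fin n} (hij : i ≠ j) (y : H) :
    ‖adjoint (T i) y‖ ^ 2 - ‖adjoint (T j) (adjoint (T i) y)‖ ^ 2
      ≤ ‖y‖ ^ 2 - ‖adjoint (T j) y‖ ^ 2 := by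
  have hperm : (List.finRange n).Perm ((((List.finRange n).erase i).erase j) ++ [i, j]) := by
    have h1 := List.perm_cons_erase (List.mem_finRange i)
    have h2 : ((List.finRange n).erase i).Perm (j :: ((List.finRange n).erase i).erase j) :=
      List.perm_cons_erase ((List.mem_erase_of_ne hij.symm).2 (List.mem_finRange j))
    exact (h1.trans (h2.cons i)).trans (List.perm_append_comm (l₁ := [i, j]))
  have hpos : ∀ h, 0 ≤ (applyDelta T (((List.finRange n).erase i).erase j)
      (applyDelta T [i, j] 1)).reApplyInnerSelf h := by
    intro h
    have h1 := hT.pos.2 h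
    rw [szegoInv_eq_foldr, applyDelta_perm T hT.comm hperm] at h1
    simpa [applyDelta, List.foldr_append] using h1
  have key := applyDelta_nonneg hT.pure _ _ hpos y
  have hF := reApplyInnerSelf_delta (T j) 1
  have hG := reApplyInnerSelf_delta (T i) (1 - T j * 1 * adjoint (T j)) y
  change 0 ≤ (1 - T j * 1 * adjoint (T j)
    - T i * (1 - T j * 1 * adjoint (T j)) * adjoint (T i)).reApplyInnerSelf y at key
  rw [hG] at key
  simp only [hF, reApplyInnerSelf_one] at key
  linarith

/-! ### Invariance of the defect spaces -/

lemma adjoint_apply_self_of_norm_le {A : H →L[ℂ] H} (hA : ‖A‖ ≤ 1) {u : H}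
    (hu : ‖u‖ ≤ ‖A u‖) : adjoint A (A u) = u := by
  have hA' : ‖adjoint A‖ ≤ 1 := by rwa [LinearIsometryEquiv.norm_map]
  have h1 : ‖adjoint A (A u)‖ ≤ ‖u‖ :=
    ((adjoint A).le_of_opNorm_le hA' _).trans (by simpa using A.le_of_opNorm_le hA u)
  have h2 := norm_sub_sq (𝕜 := ℂ) (adjoint A (A u)) u
  rw [adjoint_inner_left, inner_self_eq_norm_sq] at h2
  have h3 : ‖adjoint A (A u) - u‖ ^ 2 ≤ 0 := by
    nlinarith [norm_nonneg u, norm_nonneg (adjoint A (A u))]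
  have h4 : ‖adjoint A (A u) - u‖ = 0 := by nlinarith [norm_nonneg (adjoint A (A u) - u)]
  exact sub_eq_zero.1 (norm_eq_zero.1 h4)

/-- `(T i)*` leaves `ker (1 - (T j)* (T j))`, the kernel of the defect operator of `T j`,
invariant. -/
lemma IsSzegoTuple.adjoint_mem_ker {n : ℕ} {T : Fin n → H →L[ℂ] H} (hT : IsSzegoTuple T)
    {i j : Fin n} (hij : i ≠ j) {x : H} (hx : adjoint (T j) (T j x) = x) :
    adjoint (T j) (T j (adjoint (T i) x)) = adjoint (T i) x := by
  have hc : ∀ v, adjoint (T j) (adjoint (T i) v) = adjoint (T i) (adjoint (T j) v) := by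
    intro v
    have := congrArg adjoint (hT.comm i j)
    rw [show adjoint (T i * T j) = _ from adjoint_comp _ _,
      show adjoint (T j * T i) = _ from adjoint_comp _ _] at this
    exact congrArg (fun A : H →L[ℂ] H => A v) this
  have hy : ‖T j x‖ ^ 2 = ‖x‖ ^ 2 := by
    rw [← inner_self_eq_norm_sq (𝕜 := ℂ), ← adjoint_inner_left, hx, inner_self_eq_norm_sq]
  have h := hT.pair_ineq hij (T j x)
  rw [hx, hy, sub_self, sub_nonpos] at h
  have hn : ‖adjoint (T j)‖ ≤ 1 := by
    rw [LinearIsometryEquiv.norm_map]; exact hT.contraction j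
  -- equality in `‖(T j)* u‖ ≤ ‖u‖` for `u = (T i)* T j x`
  have h2 := adjoint_apply_self_of_norm_le hn
    ((sq_le_sq₀ (norm_nonneg _) (norm_nonneg _)).1 h)
  rw [adjoint_adjoint, hc, hx] at h2
  rw [h2, hc, hx]

/-- The range closure of a self-adjoint `D` is `(ker D)ᗮ`, so it is invariant under `X` as soon
as `ker D` is invariant under `X*`. -/
lemma image_closure_range_subset {X D : H →L[ℂ] H} (hD : adjoint D = D)
    (hX : ∀ x, D x = 0 → D (adjoint X x) = 0) :
    X '' closure (Set.range D) ⊆ closure (Set.range D) := by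
  have hcl : closure (Set.range D) = ((LinearMap.range D.toLinearMap)ᗮᗮ : Set H) := by
    rw [Submodule.orthogonal_orthogonal_eq_closure, Submodule.topologicalClosure_coe]
    rfl
  have hker : ∀ w, w ∈ (LinearMap.range D.toLinearMap)ᗮ ↔ D w = 0 := by
    intro w
    rw [Submodule.mem_orthogonal]
    constructor
    · intro h
      have := h (D (D w)) ⟨D w, rfl⟩
      rw [← hD, adjoint_inner_left, hD] at this
      exact inner_self_eq_zero.1 this
    · rintro h _ ⟨u, rfl⟩
      change inner ℂ (D u) w = 0
      rw [← adjoint_inner_right, hD, h, inner_zero_right]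
  rw [hcl]
  rintro _ ⟨v, hv, rfl⟩
  refine (Submodule.mem_orthogonal _ _).2 fun w hw => ?_
  rw [← adjoint_inner_left]
  exact (Submodule.mem_orthogonal _ _).1 hv _ ((hker _).2 (hX w ((hker w).1 hw)))

/-! ### Defect operators -/

lemma norm_sq_defect {X D : H →L[ℂ] H} (hD : adjoint D = D) (hsq : D * D = 1 - adjoint X * X)
    (h : H) : ‖D h‖ ^ 2 = ‖h‖ ^ 2 - ‖X h‖ ^ 2 := by
  have h1 : D (D h) = h - adjoint X (X h) := congrArg (fun A : H →L[ℂ] H => A h) hsq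
  rw [← inner_self_eq_norm_sq (𝕜 := ℂ), ← adjoint_inner_left, hD, h1, inner_sub_left,
    adjoint_inner_left, map_sub, inner_self_eq_norm_sq, inner_self_eq_norm_sq]

lemma apply_eq_zero_of_sq {D : H →L[ℂ] H} (hD : adjoint D = D) {x : H} (h : D (D x) = 0) :
    D x = 0 := by
  rw [← inner_self_eq_zero (𝕜 := ℂ), ← adjoint_inner_left, hD, h, inner_zero_left]

lemma mul_eq_zero_of_sq_mul_sq {D E : H →L[ℂ] H} (hD : adjoint D = D) (hE : adjoint E = E)
    (h : (D * D) * (E * E) = 0) : E * D = 0 := by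
  have h1 : D * (E * E) = 0 := by
    ext x
    exact apply_eq_zero_of_sq hD (congrArg (fun A : H →L[ℂ] H => A x) h)
  have h2 : (E * E) * D = 0 := by
    have := congrArg adjoint h1
    rwa [show adjoint (D * (E * E)) = _ from adjoint_comp _ _,
      show adjoint (E * E) = _ from adjoint_comp _ _, hD, hE, map_zero] at this
  ext x
  exact apply_eq_zero_of_sq hE (congrArg (fun A : H →L[ℂ] H => A x) h2)

/-- For a Szegő tuple `T` with positive square roots `D j` of `I − Tⱼ*Tⱼ`,
the orthogonality condition `(I − Tᵢ*Tᵢ)(I − Tⱼ*Tⱼ) = 0` for all `i ≠ j` holds iff for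
all `i ≠ j` the restriction of `Tᵢ` to the defect space `𝒟_{Tⱼ}` is an isometry of
`𝒟_{Tⱼ}` into itself. -/
theorem szego_orthogonal_defects_iff_isometric_restriction {n : ℕ} (hn : 0 < n)
    (T : Fin n → H →L[ℂ] H) (hT : IsSzegoTuple T)
    (D : Fin n → H →L[ℂ] H) (hDpos : ∀ j, (D j).IsPositive)
    (hDsq : ∀ j, D j * D j = 1 - adjoint (T j) * T j) :
    (∀ i j, i ≠ j → (1 - adjoint (T i) * T i) * (1 - adjoint (T j) * T j) = 0) ↔
      (∀ i j, i ≠ j →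
        ⇑(T i) '' closure (Set.range ⇑(D j)) ⊆ closure (Set.range ⇑(D j)) ∧
        ∀ h : H, ‖T i (D j h)‖ = ‖D j h‖) := by
  have hD : ∀ j, adjoint (D j) = D j := fun j => (hDpos j).isSelfAdjoint.adjoint_eq
  constructor
  · intro ha i j hij
    constructor
    · refine image_closure_range_subset (hD j) fun x hx => ?_
      have hsq : ∀ v, D j (D j v) = v - adjoint (T j) (T j v) := fun v =>
        congrArg (fun A : H →L[ℂ] H => A v) (hDsq j)
      have hx' : adjoint (T j) (T j x) = x := by
        have := hsq x
        rw [hx, map_zero] at this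
        exact (sub_eq_zero.1 this.symm).symm
      apply apply_eq_zero_of_sq (hD j)
      rw [hsq, hT.adjoint_mem_ker hij hx', sub_self]
    · intro h
      have h0 := ha j i hij.symm
      rw [← hDsq, ← hDsq] at h0
      have h1 : D i (D j h) = 0 :=
        congrArg (fun A : H →L[ℂ] H => A h) (mul_eq_zero_of_sq_mul_sq (hD j) (hD i) h0)
      have h2 := norm_sq_defect (hD i) (hDsq i) (D j h)
      rw [h1, norm_zero] at h2
      exact (sq_eq_sq₀ (norm_nonneg _) (norm_nonneg _)).1 (by linarith)
  · intro hb i j hij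
    rw [← hDsq, ← hDsq]
    have h1 : ∀ h, D i (D j h) = 0 := by
      intro h
      have h2 := norm_sq_defect (hD i) (hDsq i) (D j h)
      rw [(hb i j hij).2 h, sub_self] at h2
      exact norm_eq_zero.1 (pow_eq_zero_iff two_ne_zero |>.1 h2)
    ext x
    change D i (D i (D j (D j x))) = 0
    rw [h1, map_zero]
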